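/- arXiv:0811.3832 — 2 statements merged into one kernel-verified Lean document; each statement's English description precedes it below -/
import Mathlib

section
/- Let ρ ≥ 0 be an integer. A set A ⊆ ℤ² is a maximal anticode of Manhattan diameter 2ρ+1 if and only if A is a translate of a bicentred Lee sphere of radius ρ, i.e., A = {(x,y) ∈ ℤ² : |x−a|+|y−b| ≤ ρ or |x−a−1|+|y−b| ≤ ρ} or A = {(x,y) ∈ ℤ² : |x−a|+|y−b| ≤ ρ or |x−a|+|y−b−1| ≤ ρ} for some (a,b) ∈ ℤ². -/
/-- Manhattan distance on ℤ². -/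
def mdist (p q : ℤ × ℤ) : ℤ := |q.1 - p.1| + |q.2 - p.2|

/-- `A` is a maximal anticode of Manhattan diameter `r`: every pair of points of `A` is at
Manhattan distance at most `r`, and adding any point outside `A` creates a pair at distance
greater than `r`. -/
def IsMaxAnticode (A : Set (ℤ × ℤ)) (r : ℤ) : Prop :=
  (∀ p ∈ A, ∀ q ∈ A, mdist p q ≤ r) ∧
  ∀ p : ℤ × ℤ, p ∉ A → ∃ q ∈ A, r < mdist p q

lemma abs_add_abs_le_iff (a b k : ℤ) :
    |a| + |b| ≤ k ↔ a + b ≤ k ∧ a - b ≤ k ∧ -a + b ≤ k ∧ -a - b ≤ k := by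
  rcases abs_cases a with h | h <;> rcases abs_cases b with h' | h' <;> omega

/-- The rotated box: `x + y` in `[m, m + r]` and `x - y` in `[n, n + r]`. -/
def rbox (r m n : ℤ) : Set (ℤ × ℤ) :=
  {p | m ≤ p.1 + p.2 ∧ p.1 + p.2 ≤ m + r ∧ n ≤ p.1 - p.2 ∧ p.1 - p.2 ≤ n + r}

lemma rbox_dist (r m n : ℤ) (p q : ℤ × ℤ) (hp : p ∈ rbox r m n) (hq : q ∈ rbox r m n) :
    mdist p q ≤ r := by
  simp only [rbox, Set.mem_setOf_eq, mdist, abs_add_abs_le_iff] at *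
  omega

/-- A point of the plane with prescribed `x + y = u` and `x - y` in `{v, v + 1}`. -/
lemma exists_uv (u v : ℤ) : ∃ q : ℤ × ℤ, q.1 + q.2 = u ∧ v ≤ q.1 - q.2 ∧ q.1 - q.2 ≤ v + 1 :=
  ⟨((u + v + 1) / 2, u - (u + v + 1) / 2), by simp only; omega⟩

lemma exists_vu (u v : ℤ) : ∃ q : ℤ × ℤ, q.1 - q.2 = v ∧ u ≤ q.1 + q.2 ∧ q.1 + q.2 ≤ u + 1 :=
  ⟨((u + v + 1) / 2, (u + v + 1) / 2 - v), by simp only; omega⟩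

lemma rbox_max (r m n : ℤ) (hr : 1 ≤ r) : IsMaxAnticode (rbox r m n) r := by
  refine ⟨fun p hp q hq => rbox_dist r m n p q hp hq, fun p hp => ?_⟩
  have key : (p.1 + p.2 < m ∨ m + r < p.1 + p.2) ∨ (p.1 - p.2 < n ∨ n + r < p.1 - p.2) := by
    simp only [rbox, Set.mem_setOf_eq] at hp
    omega
  rcases key with (h | h) | (h | h)
  · obtain ⟨q, h1, h2, h3⟩ := exists_uv (m + r) n
    refine ⟨q, ?_, ?_⟩
    · simp only [rbox, Set.mem_setOf_eq]; omega
    · rw [← not_le, mdist, abs_add_abs_le_iff]; omega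
  · obtain ⟨q, h1, h2, h3⟩ := exists_uv m n
    refine ⟨q, ?_, ?_⟩
    · simp only [rbox, Set.mem_setOf_eq]; omega
    · rw [← not_le, mdist, abs_add_abs_le_iff]; omega
  · obtain ⟨q, h1, h2, h3⟩ := exists_vu m (n + r)
    refine ⟨q, ?_, ?_⟩
    · simp only [rbox, Set.mem_setOf_eq]; omega
    · rw [← not_le, mdist, abs_add_abs_le_iff]; omega
  · obtain ⟨q, h1, h2, h3⟩ := exists_vu m n
    refine ⟨q, ?_, ?_⟩
    · simp only [rbox, Set.mem_setOf_eq]; omega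
    · rw [← not_le, mdist, abs_add_abs_le_iff]; omega

lemma max_eq_rbox (r : ℤ) (A : Set (ℤ × ℤ)) (h : IsMaxAnticode A r) :
    ∃ m n, A = rbox r m n := by
  obtain ⟨hA, hmax⟩ := h
  have hne : ∃ p, p ∈ A := by
    by_cases h0 : ((0, 0) : ℤ × ℤ) ∈ A
    · exact ⟨_, h0⟩
    · obtain ⟨q, hq, -⟩ := hmax _ h0
      exact ⟨q, hq⟩
  obtain ⟨p0, hp0⟩ := hne
  simp only [mdist, abs_add_abs_le_iff] at hA
  obtain ⟨m, ⟨pm, hpm, rfl⟩, hm⟩ :=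
    Int.exists_least_of_bdd (P := fun z => ∃ p ∈ A, p.1 + p.2 = z)
      ⟨p0.1 + p0.2 - r, by
        rintro z ⟨p, hp, rfl⟩
        have := hA p hp p0 hp0
        omega⟩ ⟨_, p0, hp0, rfl⟩
  obtain ⟨n, ⟨pn, hpn, rfl⟩, hn⟩ :=
    Int.exists_least_of_bdd (P := fun z => ∃ p ∈ A, p.1 - p.2 = z)
      ⟨p0.1 - p0.2 - r, by
        rintro z ⟨p, hp, rfl⟩
        have := hA p hp p0 hp0
        omega⟩ ⟨_, p0, hp0, rfl⟩
  have hsub : ∀ p ∈ A, p ∈ rbox r (pm.1 + pm.2) (pn.1 - pn.2) := by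
    intro p hp
    have h1 := hm _ ⟨p, hp, rfl⟩
    have h2 := hn _ ⟨p, hp, rfl⟩
    have h3 := hA pm hpm p hp
    have h4 := hA pn hpn p hp
    simp only [rbox, Set.mem_setOf_eq]
    omega
  refine ⟨_, _, Set.Subset.antisymm hsub fun p hp => ?_⟩
  by_contra hpA
  obtain ⟨q, hq, hlt⟩ := hmax p hpA
  exact absurd (rbox_dist _ _ _ p q hp (hsub q hq)) (not_le.mpr hlt)

lemma hsphere_eq (ρ : ℤ) (hρ : 0 ≤ ρ) (a b : ℤ) :
    {p : ℤ × ℤ | |p.1 - a| + |p.2 - b| ≤ ρ ∨ |p.1 - a - 1| + |p.2 - b| ≤ ρ} =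
      rbox (2 * ρ + 1) (a + b - ρ) (a - b - ρ) := by
  ext p
  simp only [rbox, Set.mem_setOf_eq, abs_add_abs_le_iff]
  omega

lemma vsphere_eq (ρ : ℤ) (hρ : 0 ≤ ρ) (a b : ℤ) :
    {p : ℤ × ℤ | |p.1 - a| + |p.2 - b| ≤ ρ ∨ |p.1 - a| + |p.2 - b - 1| ≤ ρ} =
      rbox (2 * ρ + 1) (a + b - ρ) (a - b - 1 - ρ) := by
  ext p
  simp only [rbox, Set.mem_setOf_eq, abs_add_abs_le_iff]
  omega

/-- For `ρ ≥ 0`, the maximal anticodes of Manhattan diameter `2ρ+1` in ℤ² are exactly the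
translates of the (horizontally or vertically) bicentred Lee spheres of radius `ρ`. -/
theorem stmt_1 (ρ : ℤ) (hρ : 0 ≤ ρ) (A : Set (ℤ × ℤ)) :
    IsMaxAnticode A (2 * ρ + 1) ↔
      ∃ a b : ℤ,
        A = {p : ℤ × ℤ | |p.1 - a| + |p.2 - b| ≤ ρ ∨ |p.1 - a - 1| + |p.2 - b| ≤ ρ} ∨
        A = {p : ℤ × ℤ | |p.1 - a| + |p.2 - b| ≤ ρ ∨ |p.1 - a| + |p.2 - b - 1| ≤ ρ} := by
  simp only [hsphere_eq ρ hρ, vsphere_eq ρ hρ]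
  constructor
  · intro h
    obtain ⟨m, n, rfl⟩ := max_eq_rbox _ A h
    rcases Int.emod_two_eq_zero_or_one (m - n) with h2 | h2
    · refine ⟨(m + n) / 2 + ρ, (m - n) / 2, Or.inl ?_⟩
      congr 1 <;> omega
    · refine ⟨(m + n + 1) / 2 + ρ, (m - n - 1) / 2, Or.inr ?_⟩
      congr 1 <;> omega
  · rintro ⟨a, b, rfl | rfl⟩ <;> exact rbox_max _ _ _ (by omega)
end

section
/- There is a constant C > 0 such that for every positive integer r, every distinct difference configuration D ⊆ ℤ² whose points have pairwise hexagonal distance at most r satisfies |D| ≤ (√3/2)·r + C·r^(2/3). -/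
/-- Hexagonal (grid) distance on ℤ². -/
def hdist (p q : ℤ × ℤ) : ℤ :=
  if 0 ≤ (q.1 - p.1) * (q.2 - p.2) then max |q.1 - p.1| |q.2 - p.2|
  else |q.1 - p.1| + |q.2 - p.2|

/-- A set of points is a distinct difference configuration if all differences between
distinct pairs of its points are distinct. -/
def IsDDC {G : Type*} [Sub G] (D : Set G) : Prop :=
  ∀ p₁ ∈ D, ∀ p₂ ∈ D, ∀ q₁ ∈ D, ∀ q₂ ∈ D,
    p₂ - p₁ = q₂ - q₁ → p₂ ≠ p₁ → p₁ = q₁ ∧ p₂ = q₂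

open Finset in
lemma hex_sum (s : ℕ) : (s : ℤ)^2 ≤ 2 * ∑ i ∈ range (s+1), |(s:ℤ) - 2 * i| := by
  induction s using Nat.twoStepInduction with
  | zero => simp
  | one => simp [Finset.sum_range_succ]
  | more n ih _ =>
    rw [Finset.sum_range_succ, Finset.sum_range_succ']
    have h : ∑ k ∈ range (n+1), |((n+2:ℕ):ℤ) - 2 * ((k+1:ℕ):ℤ)| = ∑ i ∈ range (n+1), |(n:ℤ) - 2 * i| := by
      apply Finset.sum_congr rfl
      intro i _
      congr 1
      push_cast; ring
    rw [h]
    have h1 : |((n+2:ℕ):ℤ) - 2 * ((0:ℕ):ℤ)| = n + 2 := by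
      rw [abs_of_nonneg] <;> push_cast <;> omega
    have h2 : |((n+2:ℕ):ℤ) - 2 * ((n+1+1:ℕ):ℤ)| = n + 2 := by
      rw [abs_of_nonpos] <;> push_cast <;> omega
    rw [h1, h2]
    push_cast
    nlinarith

open Finset in
lemma hex_card (T : Finset (ℤ × ℤ)) (a b c : ℤ) (s : ℕ)
    (h : ∀ t ∈ T, a ≤ t.1 ∧ t.1 ≤ a + s ∧ b ≤ t.2 ∧ t.2 ≤ b + s ∧
      c ≤ t.1 - t.2 ∧ t.1 - t.2 ≤ c + s) :
    4 * (T.card : ℤ) ≤ 3 * (s + 2)^2 := by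
  set e : ℤ := c + s + b - a with he
  have h1 : T.card = ∑ i ∈ range (s+1), (T.filter (fun t => (t.1 - a).toNat = i)).card := by
    apply Finset.card_eq_sum_card_fiberwise
    intro t ht
    have := h t ht
    simp only [coe_range, Set.mem_Iio]
    omega
  have h2 : ∀ i ∈ range (s+1), ((T.filter (fun t => (t.1 - a).toNat = i)).card : ℤ)
      ≤ max 0 (s + 1 - |(i:ℤ) - e|) := by
    intro i hi
    have h3 : (T.filter (fun t => (t.1 - a).toNat = i)).card ≤
        (Icc (max b (a + i - c - s)) (min (b + s) (a + i - c))).card := by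
      apply Finset.card_le_card_of_injOn Prod.snd
      · intro t ht
        simp only [coe_filter, Set.mem_ofPred_eq] at ht
        have := h t ht.1
        simp only [coe_Icc, Set.mem_Icc]
        omega
      · intro t ht u hu htu
        simp only [coe_filter, Set.mem_ofPred_eq] at ht hu
        have := h t ht.1
        have := h u hu.1
        ext
        · omega
        · exact htu
    rw [Int.card_Icc] at h3
    rcases abs_cases ((i:ℤ) - e) with h4 | h4 <;> omega
  have h5 : (T.card : ℤ) ≤ ∑ i ∈ range (s+1), max 0 ((s:ℤ) + 1 - |(i:ℤ) - e|) := by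
    rw [h1]; push_cast
    exact Finset.sum_le_sum h2
  have h6 : ∑ i ∈ range (s+1), max 0 ((s:ℤ) + 1 - |(i:ℤ) - e|)
      = ∑ i ∈ range (s+1), max 0 ((s:ℤ) + 1 - |(s:ℤ) - i - e|) := by
    rw [← Finset.sum_range_reflect]
    apply Finset.sum_congr rfl
    intro i hi
    rw [Finset.mem_range] at hi
    have : ((s + 1 - 1 - i : ℕ) : ℤ) = s - i := by omega
    rw [this]
  have h7 : ∑ i ∈ range (s+1), (max 0 ((s:ℤ) + 1 - |(i:ℤ) - e|) + max 0 ((s:ℤ) + 1 - |(s:ℤ) - i - e|))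
      ≤ ∑ i ∈ range (s+1), (2 * ((s:ℤ)+1) - |(s:ℤ) - 2 * i|) := by
    apply Finset.sum_le_sum
    intro i hi
    rw [Finset.mem_range] at hi
    rcases abs_cases ((i:ℤ) - e) with h4 | h4 <;> rcases abs_cases ((s:ℤ) - i - e) with h5 | h5 <;>
    rcases abs_cases ((s:ℤ) - 2 * i) with h6 | h6 <;> omega
  rw [Finset.sum_add_distrib, ← h6, Finset.sum_sub_distrib] at h7
  simp only [Finset.sum_const, Finset.card_range, nsmul_eq_mul] at h7
  have h8 := hex_sum s
  push_cast at h7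
  nlinarith

open Finset in
lemma energy_bound (D W : Finset (ℤ × ℤ)) (hD : IsDDC (D : Set (ℤ × ℤ))) :
    D.addEnergy W ≤ D.card * W.card + W.card * W.card := by
  classical
  unfold Finset.addEnergy
  rw [← Finset.card_filter_add_card_filter_not (fun x : ((ℤ×ℤ)×(ℤ×ℤ))×((ℤ×ℤ)×(ℤ×ℤ)) => x.1.1 = x.1.2)]
  apply Nat.add_le_add
  · rw [← Finset.card_product]
    apply Finset.card_le_card_of_injOn (fun x => (x.1.1, x.2.1))
    · rintro ⟨⟨a, b⟩, c, d⟩ hx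
      simp at hx ⊢
      tauto
    · rintro ⟨⟨a, b⟩, c, d⟩ hx ⟨⟨a', b'⟩, c', d'⟩ hx' hh
      simp only [coe_filter, mem_filter, mem_product, Set.mem_ofPred_eq] at hx hx'
      obtain ⟨⟨_, h1⟩, rfl⟩ := hx
      obtain ⟨⟨_, h1'⟩, rfl⟩ := hx'
      simp only [Prod.mk.injEq] at hh
      obtain ⟨rfl, rfl⟩ := hh
      have e1 := add_left_cancel h1
      have e2 := add_left_cancel h1'
      subst e1; subst e2; rfl
  · rw [← Finset.card_product]
    apply Finset.card_le_card_of_injOn (fun x => (x.2.1, x.2.2))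
    · rintro ⟨⟨a, b⟩, c, d⟩ hx
      simp at hx ⊢
      tauto
    · rintro ⟨⟨a, b⟩, c, d⟩ hx ⟨⟨a', b'⟩, c', d'⟩ hx' hh
      simp only [coe_filter, mem_filter, mem_product, Set.mem_ofPred_eq] at hx hx'
      obtain ⟨⟨⟨⟨ha, hb⟩, _⟩, h1⟩, hne⟩ := hx
      obtain ⟨⟨⟨⟨ha', hb'⟩, _⟩, h1'⟩, hne'⟩ := hx'
      simp only [Prod.mk.injEq] at hh
      obtain ⟨rfl, rfl⟩ := hh
      have key : a - b = a' - b' := by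
        have e1 : a - b = d - c := by rw [sub_eq_sub_iff_add_eq_add, h1, add_comm]
        have e2 : a' - b' = d - c := by rw [sub_eq_sub_iff_add_eq_add, h1', add_comm]
        rw [e1, e2]
      obtain ⟨rfl, rfl⟩ := hD b hb a ha b' hb' a' ha' key hne
      rfl

lemma hdist_bounds (p q : ℤ × ℤ) (r : ℤ) (h : hdist p q ≤ r) :
    q.1 - p.1 ≤ r ∧ q.2 - p.2 ≤ r ∧ (q.1 - q.2) - (p.1 - p.2) ≤ r := by
  unfold hdist at h
  split_ifs at h with h0
  · have h1 := le_trans (le_max_left _ _) h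
    have h2 := le_trans (le_max_right _ _) h
    rw [abs_le] at h1 h2
    refine ⟨h1.2, h2.2, ?_⟩
    by_contra hc
    push Not at hc
    have : 0 < q.1 - p.1 := by omega
    have : q.2 - p.2 < 0 := by omega
    nlinarith
  · have := le_abs_self (q.1 - p.1)
    have := neg_abs_le (q.2 - p.2)
    have := le_abs_self (q.2 - p.2)
    have := abs_nonneg (q.1 - p.1)
    have := abs_nonneg (q.2 - p.2)
    refine ⟨?_, ?_, ?_⟩ <;> omega

open Finset Pointwise in
lemma main_ineq (r k : ℕ) (hk : 0 < k) (D : Finset (ℤ × ℤ)) (hD : IsDDC (D : Set (ℤ × ℤ)))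
    (h : ∀ p ∈ D, ∀ q ∈ D, hdist p q ≤ (r : ℤ)) :
    4 * (D.card : ℝ)^2 * k^2 ≤ 3 * ((r:ℝ) + 4 * k)^2 * (D.card + k^2) := by
  rcases D.eq_empty_or_nonempty with rfl | hne
  · simp; positivity
  obtain ⟨p, hp, hpm⟩ := D.exists_min_image (fun t => t.1) hne
  obtain ⟨q, hq, hqm⟩ := D.exists_min_image (fun t => t.2) hne
  obtain ⟨u, hu, hum⟩ := D.exists_min_image (fun t => t.1 - t.2) hne
  set W : Finset (ℤ × ℤ) := Ico (0:ℤ) k ×ˢ Ico (0:ℤ) k with hW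
  have hWc : W.card = k^2 := by simp [hW, sq]
  have hT := hex_card (D + W) p.1 q.2 (u.1 - u.2 - k) (r + 2 * k) (by
    intro t ht
    rw [Finset.mem_add] at ht
    obtain ⟨x, hx, w, hw, rfl⟩ := ht
    simp only [hW, mem_product, mem_Ico] at hw
    have h1 := hdist_bounds p x r (h p hp x hx)
    have h2 := hdist_bounds q x r (h q hq x hx)
    have h3 := hdist_bounds u x r (h u hu x hx)
    have h4 := hpm x hx
    have h5 := hqm x hx
    have h6 := hum x hx
    simp only [Prod.fst_add, Prod.snd_add]
    push_cast
    refine ⟨?_, ?_, ?_, ?_, ?_, ?_⟩ <;> omega)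
  have hE := energy_bound D W hD
  have hC := Finset.le_card_add_mul_addEnergy D W
  rw [hWc] at hE hC
  have hT' : 4 * ((D + W).card : ℝ) ≤ 3 * ((r:ℝ) + 4 * k)^2 := by
    have : 4 * ((D + W).card : ℝ) ≤ 3 * (((r + 2 * k : ℕ) : ℝ) + 2)^2 := by exact_mod_cast hT
    refine this.trans ?_
    have hk' : (1:ℝ) ≤ k := by exact_mod_cast hk
    push_cast
    gcongr 3 * ?_ ^ 2
    linarith
  have hE' : (D.addEnergy W : ℝ) ≤ k^2 * (D.card + k^2) := by
    have : (D.addEnergy W : ℝ) ≤ D.card * k^2 + k^2 * k^2 := by exact_mod_cast hE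
    linarith
  have hC' : (D.card : ℝ)^2 * (k^2)^2 ≤ (D + W).card * D.addEnergy W := by exact_mod_cast hC
  have hk2 : (0:ℝ) < k^2 := by positivity
  have h9 : 4 * ((D + W).card * D.addEnergy W : ℝ) ≤ (3 * ((r:ℝ) + 4 * k)^2) * (k^2 * (D.card + k^2)) := by
    rw [← mul_assoc]
    gcongr
  refine le_of_mul_le_mul_right ?_ hk2
  nlinarith

/-- Upper bound for `DD̄*(m,r)`: every distinct difference configuration with pairwise
hexagonal distance at most `r` has at most `(√3/2)·r + C·r^(2/3)` dots. -/
theorem stmt_7 :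
    ∃ C : ℝ, 0 < C ∧ ∀ r : ℕ, 0 < r → ∀ D : Finset (ℤ × ℤ), IsDDC (D : Set (ℤ × ℤ)) →
      (∀ p ∈ D, ∀ q ∈ D, hdist p q ≤ (r : ℤ)) →
      (D.card : ℝ) ≤ Real.sqrt 3 / 2 * (r : ℝ) + C * (r : ℝ) ^ ((2 : ℝ) / 3) := by
  refine ⟨100, by norm_num, ?_⟩
  intro r hr D hD h
  have hr1 : (1:ℝ) ≤ r := by exact_mod_cast hr
  obtain ⟨ρ, hρ⟩ : ∃ ρ : ℝ, ρ = (r:ℝ) ^ ((1:ℝ)/3) := ⟨_, rfl⟩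
  have hρ1 : 1 ≤ ρ := by rw [hρ]; exact Real.one_le_rpow hr1 (by norm_num)
  have hρ3 : (r:ℝ) = ρ^3 := by
    rw [hρ, ← Real.rpow_natCast, ← Real.rpow_mul (by positivity)]; norm_num
  have hρ2 : (r:ℝ) ^ ((2:ℝ)/3) = ρ^2 := by
    rw [hρ, ← Real.rpow_natCast, ← Real.rpow_mul (by positivity)]; norm_num
  rw [hρ2]
  have hρsq : 1 ≤ ρ^2 := one_le_pow₀ hρ1
  have hk1 : ρ^2 ≤ (⌈ρ^2⌉₊ : ℝ) := Nat.le_ceil _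
  have hk2 : (⌈ρ^2⌉₊ : ℝ) < ρ^2 + 1 := Nat.ceil_lt_add_one (by positivity)
  have hk0 : 0 < ⌈ρ^2⌉₊ := Nat.ceil_pos.mpr (by positivity)
  have hm := main_ineq r ⌈ρ^2⌉₊ hk0 D hD h
  rw [hρ3] at hm ⊢
  generalize (⌈ρ^2⌉₊ : ℝ) = k at hm hk1 hk2
  obtain ⟨m, hmm⟩ : ∃ m : ℝ, m = D.card := ⟨_, rfl⟩
  have hm0 : 0 ≤ m := by rw [hmm]; exact Nat.cast_nonneg _
  rw [← hmm] at hm ⊢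
  have hkpos : 0 < k := by linarith
  have hs : Real.sqrt 3 ^ 2 = 3 := Real.sq_sqrt (by norm_num)
  have hs0 : 0 ≤ Real.sqrt 3 := Real.sqrt_nonneg _
  have hs2 : Real.sqrt 3 ≤ 2 := by nlinarith
  obtain ⟨A, hA⟩ : ∃ A : ℝ, A = Real.sqrt 3 / 2 * (ρ^3 + 8 * ρ^2) := ⟨_, rfl⟩
  have hA0 : 0 ≤ A := by rw [hA]; positivity
  have hA2 : A^2 = 3/4 * (ρ^3 + 8 * ρ^2)^2 := by
    rw [hA, mul_pow, div_pow, hs]; norm_num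
  have hA2' : A^2 = 3/4 * (ρ+8)^2 * ρ^4 := by rw [hA2]; ring
  have hB : 3/4 * (ρ+8)^2 ≤ 61 * ρ^2 := by nlinarith
  have hk4 : ρ^4 ≤ k^2 := by
    calc ρ^4 = (ρ^2)^2 := by ring
      _ ≤ k^2 := by gcongr
  have hm2 : m^2 * k^2 ≤ A^2 * (m + k^2) := by
    have : (ρ^3 + 4 * k)^2 ≤ (ρ^3 + 8 * ρ^2)^2 := by
      gcongr ?_ ^ 2
      linarith
    have : (ρ^3 + 4 * k)^2 * (m + k^2) ≤ (ρ^3 + 8 * ρ^2)^2 * (m + k^2) := by gcongr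
    rw [hA2]; linarith
  have hAB : A^2 ≤ 61 * ρ^2 * k^2 := by
    rw [hA2']; gcongr
  have hm3 : m^2 ≤ A^2 + 61 * ρ^2 * m := by
    have : A^2 * m ≤ 61 * ρ^2 * k^2 * m := by gcongr
    refine le_of_mul_le_mul_right ?_ (by positivity : 0 < k^2)
    linarith
  have hm4 : m ≤ A + 61 * ρ^2 := by
    by_contra hc
    push Not at hc
    nlinarith [mul_nonneg hA0 (sub_nonneg.2 hc.le), mul_nonneg hm0 (sub_nonneg.2 hc.le), mul_nonneg hA0 (sq_nonneg ρ), mul_pos (show 0 < m by nlinarith) (sub_pos.2 hc)]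
  have : Real.sqrt 3 * ρ^2 ≤ 2 * ρ^2 := by gcongr
  rw [hA] at hm4
  linarith
end
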